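/- Let N, K be positive integers with K ≥ N, and let v, w : ℤ → ℂ be finitely supported. The biorthogonality conditions ∑_{n∈ℤ} w[jK−n]·exp(2πi k(jK−n)/N)·v[n−iK]·exp(2πi l(n−iK)/N) = δ[k−l]·δ[i−j] for all k, l ∈ {0,…,N−1} and i, j ∈ ℤ hold if and only if the crossambiguity function satisfies A_{v,w}(0,0) = 1 and A_{v,w}(pK, q) = 0 for all integers p and q ∈ {0,…,N−1} with (p,q) ≠ (0,0). -/

import Mathlib

/-!
Translating the summation variable by `jK` turns the biorthogonality sum with indices `k, l, i, j`
into `A_{v,w}((i-j)K, l-k)` times a unimodular phase. The phase is `1` when `i = j`, and elsewhere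
the prescribed value is `0`, so it never matters. Finally `A_{v,w}(x, ·)` is `N`-periodic, so the
differences `l - k` can be reduced to residues in `{0, …, N-1}`.
-/

open Complex

/-- The crossambiguity function
`A_{v,w}(x,y) = ∑_{n∈ℤ} v[n−x]·w[−n]·exp(2πi y n/N)`. -/
noncomputable def crossamb (N : ℕ) (v w : ℤ → ℂ) (x y : ℤ) : ℂ :=
  ∑' n : ℤ, v (n - x) * w (-n) * Complex.exp (2 * Real.pi * Complex.I * (y : ℂ) * (n : ℂ) / N)

/-- The signal `n ↦ f[n]·exp(2πi y n/N)`, that is, `f` modulated to the frequency `y/N`. The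
multiplexing waveforms are `modulate N l v` and the demultiplexing filters `modulate N k w`. -/
noncomputable def modulate (N : ℕ) (y : ℤ) (f : ℤ → ℂ) (n : ℤ) : ℂ :=
  f n * exp (2 * Real.pi * I * (y : ℂ) * (n : ℂ) / N)

/-- The lag product `n ↦ v[n−x]·w[−n]`, the sequence whose Fourier sum over `n` is the
crossambiguity function at delay `x`. -/
def lagProduct (v w : ℤ → ℂ) (x n : ℤ) : ℂ :=
  v (n - x) * w (-n)

lemma crossamb_eq_tsum_modulate (N : ℕ) (v w : ℤ → ℂ) (x y : ℤ) :
    crossamb N v w x y = ∑' n, modulate N y (lagProduct v w x) n :=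
  rfl

lemma modulate_emod (N : ℕ) (y : ℤ) (f : ℤ → ℂ) : modulate N (y % N) f = modulate N y f := by
  rcases eq_or_ne N 0 with rfl | hN
  · simp
  have hN' : (N : ℂ) ≠ 0 := Nat.cast_ne_zero.mpr hN
  funext n
  refine congrArg (f n * ·) (exp_eq_exp_iff_exists_int.mpr ⟨-(y / N) * n, ?_⟩)
  rw [Int.emod_def]
  push_cast
  field_simp
  ring

lemma modulate_mul_modulate_add (N : ℕ) (v w : ℤ → ℂ) (k l a b n : ℤ) :
    modulate N k w (b - (n + b)) * modulate N l v (n + b - a) =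
      exp (2 * Real.pi * I * l * (b - a) / N) *
        modulate N (l - k) (lagProduct v w (a - b)) n := by
  have time_w : b - (n + b) = -n := by ring
  have time_v : n + b - a = n - (a - b) := by ring
  have phases : exp (2 * Real.pi * I * k * ((-n : ℤ) : ℂ) / N) *
      exp (2 * Real.pi * I * l * ((n - (a - b) : ℤ) : ℂ) / N) =
      exp (2 * Real.pi * I * l * (b - a) / N) *
        exp (2 * Real.pi * I * ((l - k : ℤ) : ℂ) * n / N) := by
    rw [← exp_add, ← exp_add]
    push_cast
    ring_nf
  simp only [modulate, lagProduct, time_w, time_v]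
  linear_combination w (-n) * v (n - (a - b)) * phases

lemma hasSum_modulate_mul_modulate_iff (N : ℕ) (v w : ℤ → ℂ) (k l a b : ℤ) (s : ℂ) :
    HasSum (fun n ↦ modulate N k w (b - n) * modulate N l v (n - a))
        (exp (2 * Real.pi * I * l * (b - a) / N) * s) ↔
      HasSum (modulate N (l - k) (lagProduct v w (a - b))) s := by
  rw [← (Equiv.addRight b).hasSum_iff]
  simp only [Function.comp_def, Equiv.coe_addRight, modulate_mul_modulate_add]
  exact hasSum_mul_left_iff (exp_ne_zero _)

lemma hasSum_modulate_mul_modulate_iff_of_eq_zero (N : ℕ) (v w : ℤ → ℂ) (k l : ℤ) {a b : ℤ}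
    {s : ℂ} (hs : a ≠ b → s = 0) :
    HasSum (fun n ↦ modulate N k w (b - n) * modulate N l v (n - a)) s ↔
      HasSum (modulate N (l - k) (lagProduct v w (a - b))) s := by
  have phase_mul : exp (2 * Real.pi * I * l * (b - a) / N) * s = s := by
    rcases eq_or_ne a b with rfl | hab
    · simp
    · simp [hs hab]
  rw [← hasSum_modulate_mul_modulate_iff, phase_mul]

lemma summable_modulate_lagProduct {w : ℤ → ℂ} (hw : w.support.Finite) (N : ℕ) (v : ℤ → ℂ)
    (x y : ℤ) : Summable (modulate N y (lagProduct v w x)) := by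
  refine summable_of_hasFiniteSupport
    ((hw.preimage neg_injective.injOn).subset fun n hn hwn ↦ hn ?_)
  simp [modulate, lagProduct, hwn]

lemma summable_modulate_mul_modulate {w : ℤ → ℂ} (hw : w.support.Finite) (N : ℕ) (v : ℤ → ℂ)
    (k l a b : ℤ) : Summable fun n ↦ modulate N k w (b - n) * modulate N l v (n - a) :=
  ((hasSum_modulate_mul_modulate_iff N v w k l a b _).mpr
    (summable_modulate_lagProduct hw N v _ _).hasSum).summable

/-- With `HasSum` instead of `∑'`, a divergent series does not pass for one with sum `0` when `v`
and `w` have infinite support. -/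
theorem stmt14_general (N : ℕ) (K : ℤ) (hN : 0 < N) (v w : ℤ → ℂ) :
    (∀ (k l : Fin N) (i j : ℤ),
        HasSum (fun n ↦ modulate N (k : ℕ) w (j * K - n) * modulate N (l : ℕ) v (n - i * K))
          (if k = l ∧ i = j then 1 else 0)) ↔
      HasSum (modulate N 0 (lagProduct v w 0)) 1 ∧
        ∀ p q : ℤ, 0 ≤ q → q ≤ (N : ℤ) - 1 → (p, q) ≠ (0, 0) →
          HasSum (modulate N q (lagProduct v w (p * K))) 0 := by
  have lag_form (k l : Fin N) (i j : ℤ) :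
      HasSum (fun n ↦ modulate N (k : ℕ) w (j * K - n) * modulate N (l : ℕ) v (n - i * K))
          (if k = l ∧ i = j then 1 else 0) ↔
        HasSum (modulate N ((l : ℕ) - (k : ℕ)) (lagProduct v w ((i - j) * K)))
          (if k = l ∧ i = j then 1 else 0) := by
    rw [sub_mul]
    exact hasSum_modulate_mul_modulate_iff_of_eq_zero N v w _ _
      fun hij ↦ if_neg fun h ↦ hij (by rw [h.2])
  simp only [lag_form]
  constructor
  · intro h
    refine ⟨by simpa using h ⟨0, hN⟩ ⟨0, hN⟩ 0 0, fun p q hq₀ hqN hpq ↦ ?_⟩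
    lift q to ℕ using hq₀
    have off_diagonal : ¬((⟨0, hN⟩ : Fin N) = ⟨q, by omega⟩ ∧ p = 0) := by
      simp only [Fin.mk.injEq]
      rintro ⟨rfl, rfl⟩
      exact hpq rfl
    simpa [off_diagonal] using h ⟨0, hN⟩ ⟨q, by omega⟩ p 0
  · rintro ⟨h_one, h_zero⟩ k l i j
    split_ifs with hkl
    · obtain ⟨rfl, rfl⟩ := hkl
      simpa using h_one
    · have hN' : (0 : ℤ) < N := Int.natCast_pos.mpr hN
      rw [← modulate_emod]
      refine h_zero _ _ (Int.emod_nonneg _ hN'.ne')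
        (Int.le_sub_one_of_lt (Int.emod_lt_of_pos _ hN')) fun h ↦ hkl ?_
      obtain ⟨hij, hmod⟩ := Prod.mk.inj h
      have hlk : (l : ℕ) ≡ k [MOD N] :=
        Int.natCast_modEq_iff.mp (Int.modEq_iff_dvd.mpr (Int.dvd_of_emod_eq_zero hmod)).symm
      exact ⟨(Fin.ext (hlk.eq_of_lt_of_lt l.isLt k.isLt)).symm, sub_eq_zero.mp hij⟩

/-- For finitely supported `v, w : ℤ → ℂ`, the biorthogonality
conditions
`∑_{n∈ℤ} w[jK−n]·exp(2πi k(jK−n)/N)·v[n−iK]·exp(2πi l(n−iK)/N) = δ[k−l]·δ[i−j]`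
for all `k, l ∈ {0,…,N−1}` and `i, j ∈ ℤ` hold if and only if the
crossambiguity function satisfies `A_{v,w}(0,0) = 1` and `A_{v,w}(pK, q) = 0`
for all integers `p` and `q ∈ {0,…,N−1}` with `(p,q) ≠ (0,0)`. -/
theorem stmt14
    (N K : ℕ) (hN : 0 < N) (hNK : N ≤ K)
    (v w : ℤ → ℂ) (hv : (Function.support v).Finite) (hw : (Function.support w).Finite) :
    (∀ (k l : Fin N) (i j : ℤ),
        ∑' n : ℤ,
          w (j * K - n) *
              Complex.exp (2 * Real.pi * Complex.I * ((k : ℕ) : ℂ) * ((j * (K : ℤ) - n : ℤ) : ℂ) / N) *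
            (v (n - i * K) *
              Complex.exp (2 * Real.pi * Complex.I * ((l : ℕ) : ℂ) * ((n - i * (K : ℤ) : ℤ) : ℂ) / N))
          = if k = l ∧ i = j then 1 else 0)
    ↔
    (crossamb N v w 0 0 = 1 ∧
      ∀ p q : ℤ, 0 ≤ q → q ≤ (N : ℤ) - 1 → (p, q) ≠ (0, 0) →
        crossamb N v w (p * K) q = 0) := by
  have h := stmt14_general N K hN v w
  simp only [(summable_modulate_mul_modulate hw _ _ _ _ _ _).hasSum_iff,
    (summable_modulate_lagProduct hw _ _ _ _).hasSum_iff, ← crossamb_eq_tsum_modulate] at h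
  simpa only [modulate, Int.cast_natCast] using h
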